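/- Let ℓ be a loss function that is symmetric (ℓ(a,b)=ℓ(b,a)), bounded in [0,B], and satisfies the triangle inequality (ℓ(a,c) ≤ ℓ(a,b)+ℓ(b,c)). Let P and Q be probability measures on X × Y with X-marginals P_X and Q_X, and let F be a class of measurable functions from X to Ŷ. Then for every f ∈ F, E_{(x,y)∼P}[ℓ(f(x),y)] ≤ E_{(x,y)∼Q}[ℓ(f(x),y)] + d_F(P_X,Q_X) + λ, where λ = inf_{g∈F} ( E_{(x,y)∼P}[ℓ(g(x),y)] + E_{(x,y)∼Q}[ℓ(g(x),y)] ). -/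

import Mathlib

open MeasureTheory

/-- The discrepancy distance between two measures `P` and `Q` on `X`, relative to a
function class `F : Set (X → Yhat)` and a loss `ℓ : Yhat → Yhat → ℝ`:
`d_F(P,Q) = sup_{f,f'∈F} |E_{x∼P}[ℓ(f x, f' x)] − E_{x∼Q}[ℓ(f x, f' x)]|`. -/
noncomputable def discrepancy {X Yhat : Type*} [MeasurableSpace X]
    (F : Set (X → Yhat)) (ℓ : Yhat → Yhat → ℝ) (P Q : Measure X) : ℝ :=
  sSup {d : ℝ | ∃ f ∈ F, ∃ f' ∈ F,
    d = |(∫ x, ℓ (f x) (f' x) ∂P) - ∫ x, ℓ (f x) (f' x) ∂Q|}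

/-- The risk `E_{(x,y)∼P}[ℓ(f(x),y)]` of a predictor `f`, as a Bochner integral; it is `0` when
the loss is not integrable. -/
noncomputable def risk {X Yhat : Type*} [MeasurableSpace X] [MeasurableSpace Yhat]
    (ℓ : Yhat → Yhat → ℝ) (P : Measure (X × Yhat)) (f : X → Yhat) : ℝ :=
  ∫ z, ℓ (f z.1) z.2 ∂P

/-- The values `|E_P[ℓ(f,f')] − E_Q[ℓ(f,f')]|` for `f, f' ∈ F`, whose supremum is
`discrepancy F ℓ P Q`. It is named in order to speak of its boundedness: the real supremum of an
unbounded set is `0`. -/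
def discrepancyValues {X Yhat : Type*} [MeasurableSpace X]
    (F : Set (X → Yhat)) (ℓ : Yhat → Yhat → ℝ) (P Q : Measure X) : Set ℝ :=
  {d : ℝ | ∃ f ∈ F, ∃ f' ∈ F,
    d = |(∫ x, ℓ (f x) (f' x) ∂P) - ∫ x, ℓ (f x) (f' x) ∂Q|}

section Loss

variable {Ω Yhat : Type*} [MeasurableSpace Ω] {μ : Measure Ω} {ℓ : Yhat → Yhat → ℝ}
  {u v w : Ω → Yhat}

theorem loss_nonneg_of_symm_of_triangle (hsymm : ∀ a b, ℓ a b = ℓ b a)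
    (htri : ∀ a b c, ℓ a c ≤ ℓ a b + ℓ b c) (a b : Yhat) : 0 ≤ ℓ a b := by
  have hself : 0 ≤ ℓ a a := by linarith [htri a a a]
  linarith [htri a b a, hsymm a b]

theorem integrable_loss_of_abs_le [MeasurableSpace Yhat] [IsFiniteMeasure μ] {C : ℝ}
    (hC : ∀ a b, |ℓ a b| ≤ C) (hℓ : Measurable fun p : Yhat × Yhat => ℓ p.1 p.2)
    (hu : Measurable u) (hv : Measurable v) : Integrable (fun ω => ℓ (u ω) (v ω)) μ :=
  .of_bound (hℓ.comp (hu.prodMk hv)).aestronglyMeasurable C (.of_forall fun _ => hC _ _)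

theorem integrable_loss_of_triangle (hsymm : ∀ a b, ℓ a b = ℓ b a)
    (htri : ∀ a b c, ℓ a c ≤ ℓ a b + ℓ b c)
    (huw : AEStronglyMeasurable (fun ω => ℓ (u ω) (w ω)) μ)
    (huv : Integrable (fun ω => ℓ (u ω) (v ω)) μ)
    (hvw : Integrable (fun ω => ℓ (v ω) (w ω)) μ) :
    Integrable (fun ω => ℓ (u ω) (w ω)) μ := by
  refine (huv.add hvw).mono' huw (.of_forall fun ω => ?_)
  rw [Real.norm_of_nonneg (loss_nonneg_of_symm_of_triangle hsymm htri _ _)]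
  exact htri _ _ _

theorem integral_loss_triangle (hsymm : ∀ a b, ℓ a b = ℓ b a)
    (htri : ∀ a b c, ℓ a c ≤ ℓ a b + ℓ b c)
    (huv : Integrable (fun ω => ℓ (u ω) (v ω)) μ)
    (hvw : Integrable (fun ω => ℓ (v ω) (w ω)) μ) :
    ∫ ω, ℓ (u ω) (w ω) ∂μ ≤ ∫ ω, ℓ (u ω) (v ω) ∂μ + ∫ ω, ℓ (v ω) (w ω) ∂μ := by
  rw [← integral_add huv hvw]
  exact integral_mono_of_nonneg
    (.of_forall fun _ => loss_nonneg_of_symm_of_triangle hsymm htri _ _) (huv.add hvw)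
    (.of_forall fun _ => htri _ _ _)

end Loss

section Discrepancy

variable {X Yhat : Type*} [MeasurableSpace X] {F : Set (X → Yhat)} {ℓ : Yhat → Yhat → ℝ}
  {P Q : Measure X}

theorem abs_integral_sub_integral_le_discrepancy (hbdd : BddAbove (discrepancyValues F ℓ P Q))
    {f g : X → Yhat} (hf : f ∈ F) (hg : g ∈ F) :
    |(∫ x, ℓ (f x) (g x) ∂P) - ∫ x, ℓ (f x) (g x) ∂Q| ≤ discrepancy F ℓ P Q :=
  le_csSup hbdd ⟨f, hf, g, hg, rfl⟩

theorem bddAbove_discrepancyValues_of_abs_le [IsFiniteMeasure P] [IsFiniteMeasure Q] {C : ℝ}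
    (hC : ∀ a b, |ℓ a b| ≤ C) : BddAbove (discrepancyValues F ℓ P Q) := by
  refine ⟨C * P.real Set.univ + C * Q.real Set.univ, ?_⟩
  rintro _ ⟨f, -, g, -, rfl⟩
  have abs_integral_le (μ : Measure X) [IsFiniteMeasure μ] :
      |∫ x, ℓ (f x) (g x) ∂μ| ≤ C * μ.real Set.univ := by
    rw [← Real.norm_eq_abs]
    exact norm_integral_le_of_norm_le_const (.of_forall fun _ => hC _ _)
  exact (abs_sub _ _).trans (add_le_add (abs_integral_le P) (abs_integral_le Q))

end Discrepancy

section Risk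

variable {X Yhat : Type*} [MeasurableSpace X] [MeasurableSpace Yhat] {ℓ : Yhat → Yhat → ℝ}
  {P Q : Measure (X × Yhat)} {F : Set (X → Yhat)} {f g : X → Yhat}

theorem integral_loss_map_fst_le_risk_add_risk (hsymm : ∀ a b, ℓ a b = ℓ b a)
    (htri : ∀ a b c, ℓ a c ≤ ℓ a b + ℓ b c)
    (hfg : Measurable fun x => ℓ (f x) (g x))
    (hf : Integrable (fun z => ℓ (f z.1) z.2) P) (hg : Integrable (fun z => ℓ (g z.1) z.2) P) :
    ∫ x, ℓ (f x) (g x) ∂P.map Prod.fst ≤ risk ℓ P f + risk ℓ P g := by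
  rw [integral_map measurable_fst.aemeasurable hfg.aestronglyMeasurable]
  simp only [risk, hsymm (g _)] at hg ⊢
  exact integral_loss_triangle hsymm htri hf hg

theorem risk_le_integral_loss_map_fst_add_risk (hsymm : ∀ a b, ℓ a b = ℓ b a)
    (htri : ∀ a b c, ℓ a c ≤ ℓ a b + ℓ b c)
    (hfg : Measurable fun x => ℓ (f x) (g x))
    (hf : Integrable (fun z => ℓ (f z.1) z.2) P) (hg : Integrable (fun z => ℓ (g z.1) z.2) P) :
    risk ℓ P f ≤ ∫ x, ℓ (f x) (g x) ∂P.map Prod.fst + risk ℓ P g := by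
  rw [integral_map measurable_fst.aemeasurable hfg.aestronglyMeasurable]
  have hg_symm : Integrable (fun z => ℓ z.2 (g z.1)) P := by simpa only [hsymm (g _)] using hg
  have hfg_int : Integrable (fun z : X × Yhat => ℓ (f z.1) (g z.1)) P :=
    integrable_loss_of_triangle hsymm htri (hfg.comp measurable_fst).aestronglyMeasurable hf hg_symm
  exact integral_loss_triangle hsymm htri hfg_int hg

/-- The comparison between `P` and `Q` is made on `ℓ(f,g)`, which does not involve the label and
hence is seen by the marginals; going from `f` to `g` under `P` costs the `P`-risk of `g`, and going
back under `Q` costs its `Q`-risk. -/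
theorem risk_le_risk_add_discrepancy_add_risk_add_risk (hsymm : ∀ a b, ℓ a b = ℓ b a)
    (htri : ∀ a b c, ℓ a c ≤ ℓ a b + ℓ b c)
    (hbdd : BddAbove (discrepancyValues F ℓ (P.map Prod.fst) (Q.map Prod.fst)))
    (hf : f ∈ F) (hg : g ∈ F) (hfg : Measurable fun x => ℓ (f x) (g x))
    (hfP : Integrable (fun z => ℓ (f z.1) z.2) P) (hgP : Integrable (fun z => ℓ (g z.1) z.2) P)
    (hfQ : Integrable (fun z => ℓ (f z.1) z.2) Q) (hgQ : Integrable (fun z => ℓ (g z.1) z.2) Q) :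
    risk ℓ P f ≤ risk ℓ Q f + discrepancy F ℓ (P.map Prod.fst) (Q.map Prod.fst)
      + (risk ℓ P g + risk ℓ Q g) := by
  have hP : risk ℓ P f ≤ ∫ x, ℓ (f x) (g x) ∂P.map Prod.fst + risk ℓ P g :=
    risk_le_integral_loss_map_fst_add_risk hsymm htri hfg hfP hgP
  have hPQ : (∫ x, ℓ (f x) (g x) ∂P.map Prod.fst) - ∫ x, ℓ (f x) (g x) ∂Q.map Prod.fst
      ≤ discrepancy F ℓ (P.map Prod.fst) (Q.map Prod.fst) :=
    (le_abs_self _).trans (abs_integral_sub_integral_le_discrepancy hbdd hf hg)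
  have hQ : ∫ x, ℓ (f x) (g x) ∂Q.map Prod.fst ≤ risk ℓ Q f + risk ℓ Q g :=
    integral_loss_map_fst_le_risk_add_risk hsymm htri hfg hfQ hgQ
  linarith

theorem risk_le_risk_add_discrepancy_add_lambda_general (hsymm : ∀ a b, ℓ a b = ℓ b a)
    (htri : ∀ a b c, ℓ a c ≤ ℓ a b + ℓ b c)
    (hmeas : ∀ g ∈ F, ∀ g' ∈ F, Measurable fun x => ℓ (g x) (g' x))
    (hP : ∀ g ∈ F, Integrable (fun z => ℓ (g z.1) z.2) P)
    (hQ : ∀ g ∈ F, Integrable (fun z => ℓ (g z.1) z.2) Q)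
    (hbdd : BddAbove (discrepancyValues F ℓ (P.map Prod.fst) (Q.map Prod.fst))) (hf : f ∈ F) :
    risk ℓ P f ≤ risk ℓ Q f + discrepancy F ℓ (P.map Prod.fst) (Q.map Prod.fst)
      + sInf {r : ℝ | ∃ g ∈ F, r = risk ℓ P g + risk ℓ Q g} := by
  rw [← sub_le_iff_le_add']
  refine le_csInf ⟨_, f, hf, rfl⟩ ?_
  rintro _ ⟨g, hg, rfl⟩
  rw [sub_le_iff_le_add']
  exact risk_le_risk_add_discrepancy_add_risk_add_risk hsymm htri hbdd hf hg (hmeas f hf g hg)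
    (hP f hf) (hP g hg) (hQ f hf) (hQ g hg)

end Risk

/-- For a symmetric loss `ℓ`, bounded in `[0,B]` and satisfying the triangle inequality,
the risk of any `f ∈ F` under `P` is at most its risk under `Q`, plus the discrepancy
distance between the `X`-marginals, plus `λ = inf_{g∈F} (risk_P(g) + risk_Q(g))`. -/
theorem risk_le_risk_add_discrepancy_add_lambda
    {X Yhat : Type*} [MeasurableSpace X] [MeasurableSpace Yhat]
    (B : ℝ) (ℓ : Yhat → Yhat → ℝ)
    (hsymm : ∀ a b, ℓ a b = ℓ b a)
    (hbound : ∀ a b, ℓ a b ∈ Set.Icc 0 B)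
    (htri : ∀ a b c, ℓ a c ≤ ℓ a b + ℓ b c)
    (hℓmeas : Measurable fun p : Yhat × Yhat => ℓ p.1 p.2)
    (F : Set (X → Yhat)) (hF : ∀ f ∈ F, Measurable f)
    (P Q : Measure (X × Yhat)) [IsProbabilityMeasure P] [IsProbabilityMeasure Q]
    (f : X → Yhat) (hf : f ∈ F) :
    (∫ z, ℓ (f z.1) z.2 ∂P) ≤
      (∫ z, ℓ (f z.1) z.2 ∂Q)
        + discrepancy F ℓ (P.map Prod.fst) (Q.map Prod.fst)
        + sInf {r : ℝ | ∃ g ∈ F,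
            r = (∫ z, ℓ (g z.1) z.2 ∂P) + ∫ z, ℓ (g z.1) z.2 ∂Q} := by
  have hB : ∀ a b, |ℓ a b| ≤ B := fun a b => (abs_of_nonneg (hbound a b).1).trans_le (hbound a b).2
  have integrable_loss (R : Measure (X × Yhat)) [IsFiniteMeasure R] (g : X → Yhat) (hg : g ∈ F) :
      Integrable (fun z => ℓ (g z.1) z.2) R :=
    integrable_loss_of_abs_le hB hℓmeas ((hF g hg).comp measurable_fst) measurable_snd
  exact risk_le_risk_add_discrepancy_add_lambda_general hsymm htri
    (fun g hg g' hg' => hℓmeas.comp ((hF g hg).prodMk (hF g' hg')))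
    (integrable_loss P) (integrable_loss Q) (bddAbove_discrepancyValues_of_abs_le hB) hf
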